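/- Let ν, μ₁, μ₂, … be Borel probability measures on [0,∞). If ψ_{μ_n}(y) → ψ_ν(y) as n → ∞ for every y ∈ (−∞,0), then the sequence {μ_n} is tight and μ_n converges weakly to ν. -/

import Mathlib

open MeasureTheory Complex Set Filter

/-- The ψ-transform of a measure on `[0,∞)`: `ψ_μ(z) = ∫ xz/(1-xz) dμ(x)`. -/
noncomputable def psiT (μ : Measure ℝ) (z : ℂ) : ℂ :=
  ∫ x, ((x : ℂ) * z) / (1 - (x : ℂ) * z) ∂μ

/-!
Tightness: for `y < 0`, the integrand of `|ψ_μ(y)|` is at least `1/2` where `x > 1/|y|`, so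
`2|ψ_μ(y)|` dominates the mass of `μ` beyond `1/|y|`; and `ψ_ν(y) → 0` as `y ↑ 0`.

Weak convergence: `1 + ψ_μ(-s)` is the integral of the kernel `1/(1+sx)`. By the resolvent identity
a product of two distinct kernels is a linear combination of them, and a square is a limit of such
products, so the closed span of the kernels is an algebra; it contains `1` and separates points.
Convergence of integrals passes from the kernels to their closed span, and for a tight sequence such
an algebra determines the limit, by Prokhorov and Stone–Weierstrass.
-/

open scoped NNReal BoundedContinuousFunction Topology

section ClosedSpan

variable {R A : Type*} [CommSemiring R] [Semiring A] [Algebra R A] [TopologicalSpace A]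
  [ContinuousAdd A] [ContinuousMul A] [ContinuousConstSMul R A]

lemma mul_mem_topologicalClosure_span {S : Set A}
    (hS : ∀ a ∈ S, ∀ b ∈ S, a * b ∈ (Submodule.span R S).topologicalClosure) {a b : A}
    (ha : a ∈ (Submodule.span R S).topologicalClosure)
    (hb : b ∈ (Submodule.span R S).topologicalClosure) :
    a * b ∈ (Submodule.span R S).topologicalClosure := by
  have span_mul_le :
      Submodule.span R S * Submodule.span R S ≤ (Submodule.span R S).topologicalClosure := by
    rw [Submodule.span_mul_span, Submodule.span_le]
    exact Set.mul_subset_iff.2 hS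
  have mul_mem_closure : a * b ∈ closure ((Submodule.span R S).topologicalClosure : Set A) :=
    map_mem_closure₂ continuous_mul ha hb
      fun _ hx _ hy => span_mul_le (Submodule.mul_mem_mul hx hy)
  rwa [(Submodule.isClosed_topologicalClosure _).closure_eq] at mul_mem_closure

end ClosedSpan

section ConvergenceOfIntegrals

variable {X E ι : Type*} [TopologicalSpace X] [MeasurableSpace X] [OpensMeasurableSpace X]
  [NormedAddCommGroup E] [NormedSpace ℝ E] [SecondCountableTopology E]

lemma lipschitzWith_integral_boundedContinuousFunction (ν : Measure X) [IsProbabilityMeasure ν] :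
    LipschitzWith 1 fun f : X →ᵇ E => ∫ x, f x ∂ν := by
  borelize E
  refine LipschitzWith.mk_one fun f g => ?_
  rw [dist_eq_norm, dist_eq_norm, ← integral_sub (f.integrable ν) (g.integrable ν)]
  exact (f - g).norm_integral_le_norm ν

variable {l : Filter ι} {μ : ι → Measure X} [∀ i, IsProbabilityMeasure (μ i)] {ν : Measure X}
  [IsProbabilityMeasure ν]

lemma isClosed_setOf_tendsto_integral :
    IsClosed {f : X →ᵇ E | Tendsto (fun i => ∫ x, f x ∂μ i) l (𝓝 (∫ x, f x ∂ν))} :=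
  have equicontinuous : Equicontinuous fun i (f : X →ᵇ E) => ∫ x, f x ∂μ i :=
    (LipschitzWith.uniformEquicontinuous _ 1 fun i =>
      lipschitzWith_integral_boundedContinuousFunction (μ i)).equicontinuous
  equicontinuous.isClosed_setOfPred_tendsto
    (lipschitzWith_integral_boundedContinuousFunction ν).continuous

lemma tendsto_integral_of_mem_topologicalClosure_span {S : Set (X →ᵇ E)}
    (hS : ∀ f ∈ S, Tendsto (fun i => ∫ x, f x ∂μ i) l (𝓝 (∫ x, f x ∂ν))) {f : X →ᵇ E}
    (hf : f ∈ (Submodule.span ℝ S).topologicalClosure) :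
    Tendsto (fun i => ∫ x, f x ∂μ i) l (𝓝 (∫ x, f x ∂ν)) := by
  borelize E
  refine closure_minimal (fun g hg => ?_) isClosed_setOf_tendsto_integral hf
  induction hg using Submodule.span_induction with
  | mem g hg => exact hS g hg
  | zero => simpa using tendsto_const_nhds
  | add g₁ g₂ _ _ h₁ h₂ =>
    simpa [integral_add (g₁.integrable _) (g₂.integrable _)] using h₁.add h₂
  | smul c g _ hg => simpa [integral_smul] using hg.const_smul c

end ConvergenceOfIntegrals

section StieltjesKernel

/-- The kernel `x ↦ 1/(1+sx)` on `[0,∞)`, whose integral is `1 + ψ(-s)`. The half-line is encoded as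
`ℝ≥0`, where the kernels are bounded and separate points. -/
noncomputable def stieltjesKernel (s : ℝ≥0) : ℝ≥0 →ᵇ ℝ :=
  .ofNormedAddCommGroup (fun x => 1 / (1 + (s : ℝ) * (x : ℝ)))
    (continuous_const.div (by fun_prop) fun x => by positivity) 1 fun x => by
      rw [Real.norm_of_nonneg (by positivity)]
      exact div_le_one_of_le₀ (le_add_of_nonneg_right (by positivity)) (by positivity)

lemma stieltjesKernel_apply (s x : ℝ≥0) :
    stieltjesKernel s x = 1 / (1 + (s : ℝ) * (x : ℝ)) := rfl

lemma stieltjesKernel_zero : stieltjesKernel 0 = 1 := by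
  ext x
  simp [stieltjesKernel_apply]

lemma stieltjesKernel_injective {s : ℝ≥0} (hs : s ≠ 0) :
    Function.Injective (stieltjesKernel s) := fun x y hxy => by
  simpa [stieltjesKernel_apply, hs] using hxy

lemma stieltjesKernel_mul_stieltjesKernel {s r : ℝ≥0} (hsr : s ≠ r) :
    stieltjesKernel s * stieltjesKernel r =
      ((s : ℝ) / (s - r)) • stieltjesKernel s - ((r : ℝ) / (s - r)) • stieltjesKernel r := by
  ext x
  have : (s : ℝ) - r ≠ 0 := sub_ne_zero.2 (NNReal.coe_injective.ne hsr)
  have : 1 + (s : ℝ) * x ≠ 0 := by positivity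
  have : 1 + (r : ℝ) * x ≠ 0 := by positivity
  simp only [BoundedContinuousFunction.coe_mul, Pi.mul_apply, BoundedContinuousFunction.coe_sub,
    Pi.sub_apply, BoundedContinuousFunction.coe_smul, stieltjesKernel_apply, smul_eq_mul]
  field_simp
  ring

lemma dist_stieltjesKernel_le {s : ℝ≥0} (hs : s ≠ 0) (r : ℝ≥0) :
    dist (stieltjesKernel r) (stieltjesKernel s) ≤ dist r s / s := by
  refine (BoundedContinuousFunction.dist_le (by positivity)).2 fun x => ?_
  have hs' : (0 : ℝ) < s := by positivity
  have : (0 : ℝ) < 1 + r * x := by positivity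
  have : (0 : ℝ) < 1 + s * x := by positivity
  have difference : stieltjesKernel r x - stieltjesKernel s x =
      (s - r) * (x / ((1 + r * x) * (1 + s * x))) := by
    rw [stieltjesKernel_apply, stieltjesKernel_apply]
    field_simp
    ring
  have quotient_le : (x : ℝ) / ((1 + r * x) * (1 + s * x)) ≤ 1 / s := by
    rw [div_le_div_iff₀ (by positivity) hs', one_mul]
    have : (0 : ℝ) ≤ r * x * (1 + s * x) := by positivity
    linarith
  calc dist (stieltjesKernel r x) (stieltjesKernel s x)
      = dist r s * (x / ((1 + r * x) * (1 + s * x))) := by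
        rw [Real.dist_eq, difference, abs_mul, abs_of_nonneg (by positivity : (0 : ℝ) ≤ x / _),
          NNReal.dist_eq, abs_sub_comm]
    _ ≤ dist r s * (1 / s) := by gcongr
    _ = dist r s / s := mul_one_div _ _

lemma continuousAt_stieltjesKernel {s : ℝ≥0} (hs : s ≠ 0) : ContinuousAt stieltjesKernel s := by
  refine tendsto_iff_dist_tendsto_zero.2 (squeeze_zero (fun _ => dist_nonneg)
    (dist_stieltjesKernel_le hs) ?_)
  have : Tendsto (fun r => dist r s) (𝓝 s) (𝓝 0) := tendsto_iff_dist_tendsto_zero.1 tendsto_id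
  simpa using this.div_const (s : ℝ)

lemma stieltjesKernel_mem_topologicalClosure_span (s : ℝ≥0) :
    stieltjesKernel s ∈ (Submodule.span ℝ (range stieltjesKernel)).topologicalClosure :=
  Submodule.le_topologicalClosure _ (Submodule.subset_span (mem_range_self s))

lemma stieltjesKernel_mul_mem_topologicalClosure_span (s r : ℝ≥0) :
    stieltjesKernel s * stieltjesKernel r ∈
      (Submodule.span ℝ (range stieltjesKernel)).topologicalClosure := by
  set W := (Submodule.span ℝ (range stieltjesKernel)).topologicalClosure
  have mul_mem_of_ne {s r : ℝ≥0} (hsr : s ≠ r) : stieltjesKernel s * stieltjesKernel r ∈ W := by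
    rw [stieltjesKernel_mul_stieltjesKernel hsr]
    exact W.sub_mem (W.smul_mem _ (stieltjesKernel_mem_topologicalClosure_span s))
      (W.smul_mem _ (stieltjesKernel_mem_topologicalClosure_span r))
  rcases ne_or_eq s r with hsr | rfl
  · exact mul_mem_of_ne hsr
  rcases eq_or_ne s 0 with rfl | hs
  · rw [stieltjesKernel_zero, one_mul, ← stieltjesKernel_zero]
    exact stieltjesKernel_mem_topologicalClosure_span 0
  · have tendsto_square : Tendsto (fun r => stieltjesKernel s * stieltjesKernel r) (𝓝[≠] s)
        (𝓝 (stieltjesKernel s * stieltjesKernel s)) :=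
      ((continuousAt_stieltjesKernel hs).tendsto.const_mul _).mono_left nhdsWithin_le_nhds
    exact (Submodule.isClosed_topologicalClosure _).mem_of_tendsto tendsto_square
      (eventually_mem_nhdsWithin.mono fun r hr => mul_mem_of_ne (Ne.symm hr))

/-- The closed linear span of the kernels `stieltjesKernel s`, which is a star subalgebra of the
bounded continuous functions; this is the test algebra for weak convergence on `[0,∞)`. -/
noncomputable def stieltjesSubalgebra : StarSubalgebra ℝ (ℝ≥0 →ᵇ ℝ) where
  toSubalgebra := (Submodule.span ℝ (range stieltjesKernel)).topologicalClosure.toSubalgebra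
    (stieltjesKernel_zero ▸ stieltjesKernel_mem_topologicalClosure_span 0)
    fun _ _ => mul_mem_topologicalClosure_span <| by
      rintro _ ⟨s, rfl⟩ _ ⟨r, rfl⟩
      exact stieltjesKernel_mul_mem_topologicalClosure_span s r
  star_mem' {f} hf := by
    rwa [show star f = f from BoundedContinuousFunction.ext fun x => star_trivial (f x)]

lemma separatesPoints_stieltjesSubalgebra :
    (stieltjesSubalgebra.map
      (BoundedContinuousFunction.toContinuousMapStarₐ ℝ)).SeparatesPoints := fun _ _ hxy =>
  ⟨stieltjesKernel 1, ⟨_, ⟨_, stieltjesKernel_mem_topologicalClosure_span 1, rfl⟩, rfl⟩,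
    (stieltjesKernel_injective one_ne_zero).ne hxy⟩

theorem tendsto_of_tight_of_tendsto_integral_stieltjesKernel {ι : Type*} {l : Filter ι}
    {μ : ι → ProbabilityMeasure ℝ≥0} {ν : ProbabilityMeasure ℝ≥0}
    (hμ : IsTightMeasureSet (range fun i => (μ i : Measure ℝ≥0)))
    (h : ∀ s, Tendsto (fun i => ∫ x, stieltjesKernel s x ∂(μ i : Measure ℝ≥0)) l
      (𝓝 (∫ x, stieltjesKernel s x ∂(ν : Measure ℝ≥0)))) :
    Tendsto μ l (𝓝 ν) :=
  ProbabilityMeasure.tendsto_of_tight_of_separatesPoints ℝ hμ separatesPoints_stieltjesSubalgebra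
    fun _ hf => tendsto_integral_of_mem_topologicalClosure_span (forall_mem_range.2 h) hf

end StieltjesKernel

section PsiTransform

lemma psiT_ofReal (μ : Measure ℝ) (y : ℝ) :
    psiT μ y = ((∫ x, x * y / (1 - x * y) ∂μ : ℝ) : ℂ) := by
  rw [psiT, ← integral_complex_ofReal]
  push_cast
  rfl

lemma aestronglyMeasurable_mul_div_one_sub_mul (μ : Measure ℝ) (y : ℝ) :
    AEStronglyMeasurable (fun x => x * y / (1 - x * y)) μ :=
  Measurable.aestronglyMeasurable (by fun_prop)

lemma abs_mul_div_one_sub_mul_le_one {x y : ℝ} (hx : 0 ≤ x) (hy : y ≤ 0) :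
    |x * y / (1 - x * y)| ≤ 1 := by
  have hxy : x * y ≤ 0 := mul_nonpos_of_nonneg_of_nonpos hx hy
  rw [abs_div, abs_of_nonpos hxy, abs_of_pos (by linarith)]
  exact div_le_one_of_le₀ (by linarith) (by linarith)

lemma half_le_abs_div_one_sub {u : ℝ} (hu : 1 < |u|) : 1 / 2 ≤ |u / (1 - u)| := by
  have hne : 1 - u ≠ 0 := fun h => by simp [← sub_eq_zero.1 h] at hu
  have : |1 - u| ≤ 1 + |u| := by simpa using abs_sub (1 : ℝ) u
  rw [abs_div, div_le_div_iff₀ two_pos (abs_pos.2 hne)]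
  linarith

variable {μ : Measure ℝ}

lemma integrable_mul_div_one_sub_mul [IsFiniteMeasure μ] (hμ : ∀ᵐ x ∂μ, 0 ≤ x) {y : ℝ}
    (hy : y ≤ 0) : Integrable (fun x => x * y / (1 - x * y)) μ :=
  .of_bound (aestronglyMeasurable_mul_div_one_sub_mul μ y) 1
    (hμ.mono fun _ hx => abs_mul_div_one_sub_mul_le_one hx hy)

lemma norm_psiT_ofReal (hμ : ∀ᵐ x ∂μ, 0 ≤ x) {y : ℝ} (hy : y ≤ 0) :
    ‖psiT μ y‖ = ∫ x, |x * y / (1 - x * y)| ∂μ := by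
  have abs_eq : (fun x => |x * y / (1 - x * y)|) =ᵐ[μ] fun x => -(x * y / (1 - x * y)) := by
    filter_upwards [hμ] with x hx
    have hxy : x * y ≤ 0 := mul_nonpos_of_nonneg_of_nonpos hx hy
    exact abs_of_nonpos (div_nonpos_of_nonpos_of_nonneg hxy (by linarith))
  have integral_abs : ∫ x, |x * y / (1 - x * y)| ∂μ = -∫ x, x * y / (1 - x * y) ∂μ := by
    rw [integral_congr_ae abs_eq, integral_neg]
  have integral_nonpos : ∫ x, x * y / (1 - x * y) ∂μ ≤ 0 :=
    neg_nonneg.1 (integral_abs ▸ integral_nonneg fun _ => abs_nonneg _)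
  rw [psiT_ofReal, Complex.norm_real, Real.norm_of_nonpos integral_nonpos, integral_abs]

lemma measureReal_lt_norm_le_two_mul_norm_psiT [IsFiniteMeasure μ] (hμ : ∀ᵐ x ∂μ, 0 ≤ x) {r : ℝ}
    (hr : 0 < r) : μ.real {x | r < ‖x‖} ≤ 2 * ‖psiT μ (-r⁻¹ : ℝ)‖ := by
  set f : ℝ → ℝ := fun x => |x * -r⁻¹ / (1 - x * -r⁻¹)|
  have hy : -r⁻¹ ≤ 0 := neg_nonpos.2 (inv_pos.2 hr).le
  have subset : {x | r < ‖x‖} ⊆ {x | 1 / 2 ≤ f x} := fun x hx => half_le_abs_div_one_sub <| by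
    rw [abs_mul, abs_neg, abs_inv, abs_of_pos hr]
    exact (one_lt_div hr).2 hx
  have markov : 1 / 2 * μ.real {x | 1 / 2 ≤ f x} ≤ ∫ x, f x ∂μ :=
    mul_meas_ge_le_integral_of_nonneg (ae_of_all _ fun _ => abs_nonneg _)
      (integrable_mul_div_one_sub_mul hμ hy).abs _
  calc μ.real {x | r < ‖x‖} ≤ μ.real {x | 1 / 2 ≤ f x} := measureReal_mono subset
    _ ≤ 2 * ∫ x, f x ∂μ := by linarith
    _ = 2 * ‖psiT μ (-r⁻¹ : ℝ)‖ := by rw [norm_psiT_ofReal hμ hy]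

lemma tendsto_psiT_nhdsLE_zero [IsFiniteMeasure μ] (hμ : ∀ᵐ x ∂μ, 0 ≤ x) :
    Tendsto (fun y : ℝ => psiT μ y) (𝓝[≤] 0) (𝓝 0) := by
  have tendsto_integral :
      Tendsto (fun y : ℝ => ∫ x, x * y / (1 - x * y) ∂μ) (𝓝[≤] 0) (𝓝 (∫ _, 0 ∂μ)) := by
    refine tendsto_integral_filter_of_dominated_convergence (fun _ => 1)
      (.of_forall (aestronglyMeasurable_mul_div_one_sub_mul μ)) ?_ (integrable_const 1)
      (ae_of_all _ fun x => ?_)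
    · filter_upwards [self_mem_nhdsWithin] with y hy
      exact hμ.mono fun x hx => abs_mul_div_one_sub_mul_le_one hx hy
    · have : ContinuousAt (fun y => x * y / (1 - x * y)) 0 :=
        ContinuousAt.div (by fun_prop) (by fun_prop) (by simp)
      simpa using this.tendsto.mono_left nhdsWithin_le_nhds
  simpa [psiT_ofReal, Function.comp_def] using
    (continuous_ofReal.tendsto _).comp tendsto_integral

lemma integral_stieltjesKernel_map_toNNReal [IsProbabilityMeasure μ] (hμ : ∀ᵐ x ∂μ, 0 ≤ x)
    (s : ℝ≥0) :
    ∫ x, stieltjesKernel s x ∂μ.map Real.toNNReal = 1 + (psiT μ (-s : ℝ)).re := by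
  have hs : -(s : ℝ) ≤ 0 := neg_nonpos.2 s.2
  have kernel_eq : (fun x => stieltjesKernel s x.toNNReal) =ᵐ[μ]
      fun x => 1 + x * -s / (1 - x * -s) := by
    filter_upwards [hμ] with x hx
    have hne : 1 - x * -s ≠ 0 := by
      rw [mul_neg, sub_neg_eq_add]
      positivity
    rw [stieltjesKernel_apply, Real.coe_toNNReal x hx, one_add_div hne]
    ring
  rw [integral_map measurable_real_toNNReal.aemeasurable
      (stieltjesKernel s).continuous.aestronglyMeasurable, integral_congr_ae kernel_eq,
    integral_add (integrable_const 1) (integrable_mul_div_one_sub_mul hμ hs), psiT_ofReal]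
  simp

end PsiTransform

theorem isTightMeasureSet_range_of_tendsto_psiT {μ : ℕ → Measure ℝ} [∀ n, IsFiniteMeasure (μ n)]
    {ν : Measure ℝ} [IsFiniteMeasure ν] (hμ : ∀ n, ∀ᵐ x ∂μ n, 0 ≤ x) (hν : ∀ᵐ x ∂ν, 0 ≤ x)
    (h : ∀ y : ℝ, y < 0 → Tendsto (fun n => psiT (μ n) y) atTop (𝓝 (psiT ν y))) :
    IsTightMeasureSet (range μ) := by
  have limsup_le {r : ℝ} (hr : 0 < r) : limsup (fun n => μ n {x | r < ‖x‖}) atTop ≤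
      ENNReal.ofReal (2 * ‖psiT ν (-r⁻¹ : ℝ)‖) := by
    have : Tendsto (fun n => ENNReal.ofReal (2 * ‖psiT (μ n) (-r⁻¹ : ℝ)‖)) atTop
        (𝓝 (ENNReal.ofReal (2 * ‖psiT ν (-r⁻¹ : ℝ)‖))) :=
      ENNReal.tendsto_ofReal ((h _ (neg_neg_of_pos (inv_pos.2 hr))).norm.const_mul 2)
    rw [← this.limsup_eq]
    exact limsup_le_limsup (.of_forall fun n => (ENNReal.le_ofReal_iff_toReal_le
      (measure_ne_top _ _) (by positivity)).2 (measureReal_lt_norm_le_two_mul_norm_psiT (hμ n) hr))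
  have tendsto_neg_inv : Tendsto (fun r : ℝ => -r⁻¹) atTop (𝓝[≤] 0) :=
    tendsto_nhdsWithin_iff.2 ⟨by simpa using (tendsto_inv_atTop_zero (𝕜 := ℝ)).neg,
      (eventually_gt_atTop 0).mono fun r hr => neg_nonpos.2 (inv_pos.2 hr).le⟩
  have bound_tendsto :
      Tendsto (fun r : ℝ => ENNReal.ofReal (2 * ‖psiT ν (-r⁻¹ : ℝ)‖)) atTop (𝓝 0) := by
    simpa using ENNReal.tendsto_ofReal
      (((tendsto_psiT_nhdsLE_zero hν).comp tendsto_neg_inv).norm.const_mul 2)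
  exact isTightMeasureSet_range_of_tendsto_limsup_measure_norm_gt <|
    tendsto_of_tendsto_of_tendsto_of_le_of_le' tendsto_const_nhds bound_tendsto
      (.of_forall fun _ => zero_le) ((eventually_gt_atTop 0).mono fun _ => limsup_le)

lemma map_coe_map_toNNReal {μ : Measure ℝ} (hμ : ∀ᵐ x ∂μ, 0 ≤ x) :
    (μ.map Real.toNNReal).map ((↑) : ℝ≥0 → ℝ) = μ := by
  rw [Measure.map_map measurable_coe_nnreal_real measurable_real_toNNReal]
  exact (Measure.map_congr (hμ.mono fun x hx => Real.coe_toNNReal x hx)).trans Measure.map_id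

theorem tendsto_of_tight_of_tendsto_psiT {ι : Type*} {l : Filter ι} {μ : ι → ProbabilityMeasure ℝ}
    {ν : ProbabilityMeasure ℝ} (hμ : ∀ i, ∀ᵐ x ∂(μ i : Measure ℝ), 0 ≤ x)
    (hν : ∀ᵐ x ∂(ν : Measure ℝ), 0 ≤ x)
    (htight : IsTightMeasureSet (range fun i => (μ i : Measure ℝ)))
    (h : ∀ y : ℝ, y < 0 → Tendsto (fun i => psiT (μ i) y) l (𝓝 (psiT ν y))) :
    Tendsto μ l (𝓝 ν) := by
  let toHalfLine (ρ : ProbabilityMeasure ℝ) : ProbabilityMeasure ℝ≥0 :=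
    ρ.map measurable_real_toNNReal.aemeasurable
  have map_coe_toHalfLine {ρ : ProbabilityMeasure ℝ} (hρ : ∀ᵐ x ∂(ρ : Measure ℝ), 0 ≤ x) :
      (toHalfLine ρ).map NNReal.continuous_coe.measurable.aemeasurable = ρ :=
    Subtype.ext (map_coe_map_toNNReal hρ)
  have tight : IsTightMeasureSet (range fun i => (toHalfLine (μ i) : Measure ℝ≥0)) := by
    simpa only [toHalfLine, ProbabilityMeasure.toMeasure_map, ← range_comp, Function.comp_def]
      using htight.map continuous_real_toNNReal
  have tendsto_kernel (s : ℝ≥0) :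
      Tendsto (fun i => ∫ x, stieltjesKernel s x ∂(toHalfLine (μ i) : Measure ℝ≥0)) l
        (𝓝 (∫ x, stieltjesKernel s x ∂(toHalfLine ν : Measure ℝ≥0))) := by
    rcases eq_or_ne s 0 with rfl | hs
    · simpa [stieltjesKernel_zero] using tendsto_const_nhds
    · have re_tendsto := (continuous_re.tendsto _).comp (h (-s) (by simpa using pos_of_ne_zero hs))
      simpa only [toHalfLine, ProbabilityMeasure.toMeasure_map,
        integral_stieltjesKernel_map_toNNReal (hμ _), integral_stieltjesKernel_map_toNNReal hν,
        Function.comp_def]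
        using re_tendsto.const_add 1
  have tendsto_map_coe := ProbabilityMeasure.tendsto_map_of_tendsto_of_continuous _ _
    (tendsto_of_tight_of_tendsto_integral_stieltjesKernel tight tendsto_kernel)
    NNReal.continuous_coe
  simpa only [map_coe_toHalfLine (hμ _), map_coe_toHalfLine hν] using tendsto_map_coe

/-- If `ψ_{μ_n}(y) → ψ_ν(y)` for all `y ∈ (−∞,0)`, then `{μ_n}` is tight and
`μ_n` converges weakly to `ν`. -/
theorem tight_and_weak_convergence_of_psi (ν : Measure ℝ) (μ : ℕ → Measure ℝ)
    [IsProbabilityMeasure ν] [∀ n, IsProbabilityMeasure (μ n)]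
    (hνs : ν (Set.Iio (0 : ℝ)) = 0) (hμs : ∀ n, (μ n) (Set.Iio (0 : ℝ)) = 0)
    (h : ∀ y : ℝ, y < 0 →
      Tendsto (fun n => psiT (μ n) (y : ℂ)) atTop (nhds (psiT ν (y : ℂ)))) :
    (∀ ε : ℝ, 0 < ε → ∃ K : Set ℝ, IsCompact K ∧ ∀ n, (μ n) Kᶜ ≤ ENNReal.ofReal ε) ∧
    (∀ f : BoundedContinuousFunction ℝ ℝ,
        Tendsto (fun n => ∫ x, f x ∂(μ n)) atTop (nhds (∫ x, f x ∂ν))) := by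
  have ae_nonneg {ρ : Measure ℝ} (hρ : ρ (Iio 0) = 0) : ∀ᵐ x ∂ρ, 0 ≤ x := by
    simpa using measure_eq_zero_iff_ae_notMem.1 hρ
  have tight : IsTightMeasureSet (range μ) :=
    isTightMeasureSet_range_of_tendsto_psiT (fun n => ae_nonneg (hμs n)) (ae_nonneg hνs) h
  refine ⟨fun ε hε => ?_, ?_⟩
  · simpa using isTightMeasureSet_iff_exists_isCompact_measure_compl_le.1 tight
      (ENNReal.ofReal ε) (ENNReal.ofReal_pos.2 hε)
  · exact ProbabilityMeasure.tendsto_iff_forall_integral_tendsto.1 <|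
      tendsto_of_tight_of_tendsto_psiT (μ := fun n => ⟨μ n, inferInstance⟩)
        (ν := ⟨ν, inferInstance⟩) (fun n => ae_nonneg (hμs n)) (ae_nonneg hνs) tight h
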